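/- Run the full-gradient variant of the algorithm. Then for every k ≥ 1: F(x^k) − F* ≤ (3L_g/(2k))·‖x⁰ − x*‖² + (‖A‖²/(L_g·k))·(2L_b/L_g + 1)·D_U + ((L_b − 1)·‖A‖²/(L_g²·k))·(ln k + 1)·D_U. -/

import Mathlib

open scoped RealInnerProductSpace BigOperators

/-- First-order lower bound for a convex function with a gradient. -/
lemma aux_convex_lower {E : Type*} [NormedAddCommGroup E] [InnerProductSpace ℝ E] [CompleteSpace E]
    (g : E → ℝ) (g' : E → E) (hg : ConvexOn ℝ Set.univ g)
    (hd : ∀ y, HasGradientAt g (g' y) y) (x y : E) :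
    g x + ⟪g' x, y - x⟫ ≤ g y := by
  have hline : ∀ t : ℝ, HasDerivAt (fun t : ℝ => g (x + t • (y - x)))
      ⟪g' (x + t • (y - x)), y - x⟫ t := by
    intro t
    have h1 : HasDerivAt (fun t : ℝ => x + t • (y - x)) (y - x) t := by
      simpa using ((hasDerivAt_id t).smul_const (y - x)).const_add x
    have h2 := (hd (x + t • (y - x))).hasFDerivAt.comp_hasDerivAt t h1
    have h3 : HasDerivAt (fun t : ℝ => g (x + t • (y - x))) _ t := h2
    exact h3.congr_deriv (by simp)
  have hc : ConvexOn ℝ Set.univ (fun t : ℝ => g (x + t • (y - x))) := by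
    refine ⟨convex_univ, ?_⟩
    intro s _ t _ a c ha hc hac
    have := hg.2 (Set.mem_univ (x + s • (y - x))) (Set.mem_univ (x + t • (y - x))) ha hc hac
    convert this using 2
    have hx : x = (a + c) • x := by rw [hac, one_smul]
    nth_rewrite 1 [hx]
    simp only [smul_eq_mul]
    module
  have h := hc.le_slope_of_hasDerivAt (Set.mem_univ 0) (Set.mem_univ 1) one_pos (hline 0)
  simp [slope] at h
  linarith

/-- Descent lemma. -/
lemma aux_descent {E : Type*} [NormedAddCommGroup E] [InnerProductSpace ℝ E] [CompleteSpace E]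
    (g : E → ℝ) (g' : E → E) (L : ℝ) (hL : 0 < L)
    (hd : ∀ y, HasGradientAt g (g' y) y) (hlip : LipschitzWith (Real.toNNReal L) g') (x y : E) :
    g y ≤ g x + ⟪g' x, y - x⟫ + L / 2 * ‖y - x‖ ^ 2 := by
  have hline : ∀ t : ℝ, HasDerivAt (fun t : ℝ => g (x + t • (y - x)))
      ⟪g' (x + t • (y - x)), y - x⟫ t := by
    intro t
    have h1 : HasDerivAt (fun t : ℝ => x + t • (y - x)) (y - x) t := by
      simpa using ((hasDerivAt_id t).smul_const (y - x)).const_add x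
    have h2 := (hd (x + t • (y - x))).hasFDerivAt.comp_hasDerivAt t h1
    have h3 : HasDerivAt (fun t : ℝ => g (x + t • (y - x))) _ t := h2
    exact h3.congr_deriv (by simp)
  let ψ : ℝ → ℝ := fun t => g (x + t • (y - x)) - t * ⟪g' x, y - x⟫ - L / 2 * ‖y - x‖ ^ 2 * t ^ 2
  have hψ : ∀ t, HasDerivAt ψ (⟪g' (x + t • (y - x)), y - x⟫ - ⟪g' x, y - x⟫
      - L / 2 * ‖y - x‖ ^ 2 * (2 * t)) t := by
    intro t
    have h2 := ((hasDerivAt_id t).mul_const ⟪g' x, y - x⟫)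
    have h3 := ((hasDerivAt_id t).pow 2).const_mul (L / 2 * ‖y - x‖ ^ 2)
    have := ((hline t).sub h2).sub h3
    exact this.congr_deriv (by simp)
  have hanti : AntitoneOn ψ (Set.Icc 0 1) := by
    apply antitoneOn_of_deriv_nonpos (convex_Icc 0 1)
    · exact fun t _ => (hψ t).continuousAt.continuousWithinAt
    · exact fun t _ => (hψ t).differentiableAt.differentiableWithinAt
    · intro t ht
      rw [interior_Icc] at ht
      rw [(hψ t).deriv, ← inner_sub_left]
      have h1 := real_inner_le_norm (g' (x + t • (y - x)) - g' x) (y - x)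
      have h2 := hlip.dist_le_mul (x + t • (y - x)) x
      rw [dist_eq_norm, dist_eq_norm, add_sub_cancel_left, norm_smul, Real.norm_eq_abs,
        abs_of_pos ht.1, Real.coe_toNNReal _ hL.le] at h2
      have h3 := mul_le_mul_of_nonneg_right h2 (norm_nonneg (y - x))
      nlinarith
  have := hanti (Set.left_mem_Icc.2 zero_le_one) (Set.right_mem_Icc.2 zero_le_one) zero_le_one
  simp only [ψ, one_smul, zero_smul, add_sub_cancel, add_zero] at this
  linarith

/-- Quadratic growth at a maximizer from a `t → 0` inequality. -/
lemma aux_limit (D c : ℝ) (h : ∀ t : ℝ, 0 < t → t < 1 → D + (1 - t) * c ≤ 0) : D + c ≤ 0 := by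
  by_contra hcon
  push Not at hcon
  rcases le_or_gt c 0 with hc | hc
  · have := h (1/2) (by norm_num) (by norm_num)
    nlinarith
  · have hpos : 0 < min (1/2) ((D + c) / (2 * c)) := by positivity
    have := h _ hpos (lt_of_le_of_lt (min_le_left _ _) (by norm_num))
    have h2 : min (1/2) ((D + c) / (2 * c)) * c ≤ (D + c) / 2 := by
      calc _ ≤ ((D + c) / (2 * c)) * c := by gcongr; exact min_le_right _ _
        _ = _ := by field_simp
    nlinarith

/-- Abstract one-step inequality. -/
lemma aux_step {E : Type*} [NormedAddCommGroup E] [InnerProductSpace ℝ E]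
    (k Lg γ γ' B Fk Fp Fh Fs : ℝ) (hk : 0 ≤ k) (hLg : 0 < Lg)
    (x xt xh xp xtp xs d : E)
    (hxh : xh = (1 - 1 / (k + 1)) • x + (1 / (k + 1)) • xt)
    (hxp : xp = xh - (1 / (2 * Lg * (k + 1))) • d)
    (hxtp : xtp = xt - (1 / (k + 1))⁻¹ • (xh - xp))
    (h1 : Fp ≤ Fh + ⟪d, xp - xh⟫ + (2 * Lg * (k + 1)) / 2 * ‖xp - xh‖ ^ 2)
    (h2 : k * (Fh + ⟪d, x - xh⟫ - B * (γ - γ')) ≤ k * Fk)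
    (h3 : Fh + ⟪d, xs - xh⟫ + B * γ' ≤ Fs) :
    (k + 1) * (Fp - Fs) + Lg * ‖xtp - xs‖ ^ 2 ≤
      k * (Fk - Fs) + Lg * ‖xt - xs‖ ^ 2 + B * (k * γ - (k + 1) * γ') := by
  have hk1 : 0 < k + 1 := by linarith
  have e1 : xp - xh = -(1 / (2 * Lg * (k + 1))) • d := by rw [hxp]; module
  have e2 : xtp - xs = (xt - xs) - (1 / (2 * Lg)) • d := by
    have : xh - xp = (1 / (2 * Lg * (k + 1))) • d := by rw [hxp]; module
    rw [hxtp, this, smul_smul]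
    have : (1 / (k + 1))⁻¹ * (1 / (2 * Lg * (k + 1))) = 1 / (2 * Lg) := by field_simp
    rw [this]; module
  have e3 : k * ⟪d, x - xh⟫ + ⟪d, xs - xh⟫ = - ⟪d, xt - xs⟫ := by
    rw [← real_inner_smul_right, ← inner_add_right, ← inner_neg_right]
    congr 1
    have : (k + 1) • xh = k • x + xt := by
      rw [hxh, smul_add, smul_smul, smul_smul]
      congr 2
      · field_simp; ring
      · rw [mul_one_div_cancel hk1.ne', one_smul]
    have h4 : k • (x - xh) + (xs - xh) = k • x + xs - (k + 1) • xh := by module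
    rw [h4, this]; module
  have e4 : ‖xtp - xs‖ ^ 2 = ‖xt - xs‖ ^ 2 - 1 / Lg * ⟪d, xt - xs⟫
      + 1 / (4 * Lg ^ 2) * ‖d‖ ^ 2 := by
    rw [e2, norm_sub_sq_real, norm_smul, real_inner_smul_right, real_inner_comm, mul_pow,
      Real.norm_eq_abs, sq_abs]
    field_simp
    ring
  have e5 : Fp ≤ Fh - 1 / (4 * Lg * (k + 1)) * ‖d‖ ^ 2 := by
    rw [e1, norm_smul, real_inner_smul_right, real_inner_self_eq_norm_sq, mul_pow,
      Real.norm_eq_abs, sq_abs] at h1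
    refine h1.trans (le_of_eq ?_)
    field_simp
    ring
  have e6 := mul_le_mul_of_nonneg_left e5 hk1.le
  have e7 : (k + 1) * (Fh - 1 / (4 * Lg * (k + 1)) * ‖d‖ ^ 2)
      = (k + 1) * Fh - 1 / (4 * Lg) * ‖d‖ ^ 2 := by field_simp
  have e8 : Lg * ‖xtp - xs‖ ^ 2 = Lg * ‖xt - xs‖ ^ 2 - ⟪d, xt - xs⟫
      + 1 / (4 * Lg) * ‖d‖ ^ 2 := by
    rw [e4]; field_simp
  rw [e7] at e6
  rw [e8]
  linarith

theorem stmt_17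
    {n : ℕ} (hn : 1 ≤ n)
    (U : Set (EuclideanSpace ℝ (Fin n)))
    (hUne : U.Nonempty) (hUcl : IsClosed U) (hUcx : Convex ℝ U)
    (φ : EuclideanSpace ℝ (Fin n) → EReal)
    (hφbot : ∀ v, φ v ≠ ⊥)
    (hφlsc : LowerSemicontinuous φ)
    (hφcx : ∀ v w : EuclideanSpace ℝ (Fin n), ∀ a c : ℝ, 0 ≤ a → 0 ≤ c → a + c = 1 →
      φ (a • v + c • w) ≤ (a : EReal) * φ v + (c : EReal) * φ w)
    (hφdom : ∃ v ∈ U, φ v ≠ ⊤)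
    (b : EuclideanSpace ℝ (Fin n) → ℝ)
    (hbcont : Continuous b)
    (hbsc : StrongConvexOn U 1 b)
    (ustar : ℝ → EuclideanSpace ℝ (Fin n) → EuclideanSpace ℝ (Fin n))
    (humem : ∀ γ > (0:ℝ), ∀ z, ustar γ z ∈ U)
    (hufin : ∀ γ > (0:ℝ), ∀ z, φ (ustar γ z) ≠ ⊤)
    (humax : ∀ γ > (0:ℝ), ∀ z, ∀ v ∈ U,
      (⟪z, v⟫ : EReal) - φ v - ((γ * b v : ℝ) : EReal)
        ≤ (⟪z, ustar γ z⟫ : EReal) - φ (ustar γ z) - ((γ * b (ustar γ z) : ℝ) : EReal))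
    (φs : ℝ → EuclideanSpace ℝ (Fin n) → ℝ)
    (hφs : ∀ γ z, φs γ z = ⟪z, ustar γ z⟫ - (φ (ustar γ z)).toReal - γ * b (ustar γ z))
    {p : ℕ} (hp : 1 ≤ p)
    (A : EuclideanSpace ℝ (Fin n) →L[ℝ] EuclideanSpace ℝ (Fin p))
    (hAnorm : 0 < ‖A‖)
    (b' : EuclideanSpace ℝ (Fin n) → EuclideanSpace ℝ (Fin n))
    (Lb : ℝ) (hLb : 1 ≤ Lb)
    (hbgrad : ∀ v, HasGradientAt b (b' v) v)
    (hbgradlip : LipschitzWith (Real.toNNReal Lb) b')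
    (uc : EuclideanSpace ℝ (Fin n)) (hucU : uc ∈ U) (hbuc : b uc = 0)
    (hucmin : ∀ v ∈ U, b uc ≤ b v)
    (hbsand : ∀ v ∈ U, (1/2) * ‖v - uc‖^2 ≤ b v ∧ b v ≤ (Lb/2) * ‖v - uc‖^2)
    (DU : ℝ)
    (hDUbdd : BddAbove (b '' {v | v ∈ U ∧ φ v ≠ ⊤}))
    (hDU : DU = sSup (b '' {v | v ∈ U ∧ φ v ≠ ⊤}))
    (f : EuclideanSpace ℝ (Fin p) → EReal)
    (hf : ∀ x, f x = ⨆ v ∈ U, ((⟪x, A v⟫ : EReal) - φ v))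
    (g : EuclideanSpace ℝ (Fin p) → ℝ) (hgcx : ConvexOn ℝ Set.univ g)
    (g' : EuclideanSpace ℝ (Fin p) → EuclideanSpace ℝ (Fin p))
    (Lg : ℝ) (hLg : 0 < Lg)
    (hggrad : ∀ y, HasGradientAt g (g' y) y)
    (hglip : LipschitzWith (Real.toNNReal Lg) g')
    (τ : ℕ → ℝ) (hτ : ∀ k : ℕ, τ k = 1/((k:ℝ) + 1))
    (γs : ℕ → ℝ) (hγs1 : γs 1 = ‖A‖^2 / Lg)
    (hγsrec : ∀ k : ℕ, 1 ≤ k →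
      γs (k+1) = (k:ℝ) * γs k * ‖A‖^2 / (Lg * γs k + ‖A‖^2 * ((k:ℝ)+1)))
    (x xt xh : ℕ → EuclideanSpace ℝ (Fin p))
    (hxt0 : xt 0 = x 0)
    (hxh : ∀ k : ℕ, xh k = (1 - τ k) • x k + τ k • xt k)
    (hxrec : ∀ k : ℕ, x (k+1)
        = xh k - (1/(Lg + ‖A‖^2/γs (k+1))) • (g' (xh k) + A (ustar (γs (k+1)) ((ContinuousLinearMap.adjoint A) (xh k)))))
    (hxtrec : ∀ k : ℕ, xt (k+1) = xt k - (τ k)⁻¹ • (xh k - x (k+1)))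
    (xs : EuclideanSpace ℝ (Fin p)) (Fs : ℝ)
    (hFs : f xs + ((g xs : ℝ) : EReal) = (Fs : EReal))
    (hFmin : ∀ y, (Fs : EReal) ≤ f y + ((g y : ℝ) : EReal))
    :
    ∀ k : ℕ, 1 ≤ k →
      (f (x k) + ((g (x k) : ℝ) : EReal)) - (Fs : EReal)
        ≤ ((3*Lg/(2*(k:ℝ)) * ‖x 0 - xs‖^2
            + ‖A‖^2/(Lg*(k:ℝ)) * (2*Lb/Lg + 1) * DU
            + (Lb - 1)*‖A‖^2/(Lg^2*(k:ℝ)) * (Real.log (k:ℝ) + 1) * DU : ℝ) : EReal) := by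
  set a := ‖A‖ ^ 2 with ha
  have ha0 : 0 < a := by positivity
  set G := a / Lg with hG
  have hG0 : 0 < G := by positivity
  have hγ : ∀ k : ℕ, γs (k + 1) = G / (2 * (k:ℝ) + 1) := by
    intro k
    induction k with
    | zero => simp [hγs1]
    | succ k ih =>
      rw [hγsrec (k+1) (by omega), ih, hG]
      push_cast
      have : (0:ℝ) ≤ k := k.cast_nonneg
      field_simp
      ring
  have hγpos : ∀ k : ℕ, 0 < γs (k + 1) := by
    intro k; rw [hγ]; positivity
  let r : EuclideanSpace ℝ (Fin n) → ℝ := fun v => (φ v).toReal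
  have hr : ∀ v, φ v ≠ ⊤ → φ v = ((r v : ℝ) : EReal) := fun v hv =>
    (EReal.coe_toReal hv (hφbot v)).symm
  -- real form of the maximality
  have hmaxr : ∀ γ > (0:ℝ), ∀ z, ∀ v ∈ U, φ v ≠ ⊤ →
      ⟪z, v⟫ - r v - γ * b v ≤ φs γ z := by
    intro γ hγ0 z v hv hvt
    have h := humax γ hγ0 z v hv
    rw [hr v hvt, hr _ (hufin γ hγ0 z)] at h
    rw [hφs]
    exact_mod_cast h
  have hb0 : ∀ v ∈ U, 0 ≤ b v := fun v hv => by
    have := hucmin v hv; linarith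
  have hbD : ∀ v ∈ U, φ v ≠ ⊤ → b v ≤ DU := fun v hv hvt => by
    rw [hDU]; exact le_csSup hDUbdd ⟨v, ⟨hv, hvt⟩, rfl⟩
  have hD0 : 0 ≤ DU := by
    obtain ⟨v, hv, hvt⟩ := hφdom
    exact (hb0 v hv).trans (hbD v hv hvt)
  -- quadratic growth
  have hquad : ∀ γ > (0:ℝ), ∀ z, ∀ v ∈ U, φ v ≠ ⊤ →
      ⟪z, v⟫ - r v - γ * b v + γ / 2 * ‖v - ustar γ z‖ ^ 2 ≤ φs γ z := by
    intro γ hγ0 z v hv hvt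
    set u := ustar γ z with hu
    have huU : u ∈ U := humem γ hγ0 z
    have hut : φ u ≠ ⊤ := hufin γ hγ0 z
    have key : ∀ t : ℝ, 0 < t → t < 1 →
        (⟪z, v⟫ - r v - γ * b v - φs γ z) + (1 - t) * (γ / 2 * ‖v - u‖ ^ 2) ≤ 0 := by
      intro t ht0 ht1
      have hw : t • v + (1 - t) • u ∈ U := hUcx hv huU ht0.le (by linarith) (by ring)
      have hφw := hφcx v u t (1 - t) ht0.le (by linarith) (by ring)
      rw [hr v hvt, hr u hut] at hφw
      have hφw' : φ (t • v + (1 - t) • u) ≤ ((t * r v + (1 - t) * r u : ℝ) : EReal) := by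
        exact_mod_cast hφw
      have hwt : φ (t • v + (1 - t) • u) ≠ ⊤ := ne_top_of_le_ne_top (EReal.coe_ne_top _) hφw'
      rw [hr _ hwt] at hφw'
      have hrw : r (t • v + (1 - t) • u) ≤ t * r v + (1 - t) * r u := by exact_mod_cast hφw'
      have hbw := hbsc.2 hv huU ht0.le (by linarith : 0 ≤ 1 - t) (by ring)
      simp only [smul_eq_mul] at hbw
      have hm := hmaxr γ hγ0 z _ hw hwt
      rw [inner_add_right, real_inner_smul_right, real_inner_smul_right] at hm
      have hval := hφs γ z
      have hgb := mul_le_mul_of_nonneg_left hbw hγ0.le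
      have hfin : t * ((⟪z, v⟫ - r v - γ * b v - φs γ z) + (1 - t) * (γ / 2 * ‖v - u‖ ^ 2)) ≤ 0 := by
        have hval' : φs γ z = ⟪z, u⟫ - r u - γ * b u := hval
        nlinarith
      by_contra hcon
      push Not at hcon
      have := mul_pos ht0 hcon
      linarith
    have := aux_limit _ _ key
    linarith
  let fg : ℝ → EuclideanSpace ℝ (Fin p) → ℝ := fun γ y => φs γ (ContinuousLinearMap.adjoint A y)
  let us : ℝ → EuclideanSpace ℝ (Fin p) → EuclideanSpace ℝ (Fin n) :=
    fun γ y => ustar γ (ContinuousLinearMap.adjoint A y)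
  have hadj : ∀ y v, ⟪ContinuousLinearMap.adjoint A y, v⟫ = ⟪y, A v⟫ := fun y v =>
    ContinuousLinearMap.adjoint_inner_left A v y
  have hfg : ∀ γ y, fg γ y = ⟪y, A (us γ y)⟫ - r (us γ y) - γ * b (us γ y) := by
    intro γ y
    simp only [fg, us]
    rw [hφs, hadj]
  -- tangent bound
  have htan : ∀ γ > (0:ℝ), ∀ γ2 > (0:ℝ), ∀ y z,
      fg γ y + ⟪A (us γ y), z - y⟫ - b (us γ y) * (γ2 - γ) ≤ fg γ2 z := by
    intro γ h1 γ2 h2 y z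
    have := hmaxr γ2 h2 (ContinuousLinearMap.adjoint A z) (us γ y) (humem γ h1 _) (hufin γ h1 _)
    rw [hadj] at this
    have c1 := real_inner_comm z (A (us γ y))
    have c2 := real_inner_comm y (A (us γ y))
    rw [hfg γ y, inner_sub_right]
    change _ ≤ fg γ2 z at this
    linarith
  -- smoothness bound
  have hsm : ∀ γ > (0:ℝ), ∀ y z,
      fg γ z ≤ fg γ y + ⟪A (us γ y), z - y⟫ + a / γ / 2 * ‖z - y‖ ^ 2 := by
    intro γ h1 y z
    have h := hquad γ h1 (ContinuousLinearMap.adjoint A y) (us γ z) (humem γ h1 _) (hufin γ h1 _)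
    rw [hadj] at h
    change _ + γ / 2 * ‖us γ z - us γ y‖ ^ 2 ≤ fg γ y at h
    have h2 := hfg γ z
    have h3 : ⟪z, A (us γ z)⟫ = ⟪y, A (us γ z)⟫ + ⟪A (us γ y), z - y⟫
        + ⟪A (us γ z - us γ y), z - y⟫ := by
      have c1 := real_inner_comm z (A (us γ z))
      have c2 := real_inner_comm y (A (us γ z))
      rw [map_sub, inner_sub_left, inner_sub_right, inner_sub_right]
      linarith
    have h4 : ⟪A (us γ z - us γ y), z - y⟫ ≤ ‖A‖ * ‖us γ z - us γ y‖ * ‖z - y‖ :=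
      (real_inner_le_norm _ _).trans (by gcongr; exact A.le_opNorm _)
    have h5 : ‖A‖ * ‖us γ z - us γ y‖ * ‖z - y‖ ≤
        a / γ / 2 * ‖z - y‖ ^ 2 + γ / 2 * ‖us γ z - us γ y‖ ^ 2 := by
      have : a / γ / 2 * ‖z - y‖ ^ 2 + γ / 2 * ‖us γ z - us γ y‖ ^ 2
          - ‖A‖ * ‖us γ z - us γ y‖ * ‖z - y‖
          = (‖A‖ * ‖z - y‖ - γ * ‖us γ z - us γ y‖) ^ 2 / (2 * γ) := by
        rw [ha]; field_simp; ring
      have h6 : 0 ≤ (‖A‖ * ‖z - y‖ - γ * ‖us γ z - us γ y‖) ^ 2 / (2 * γ) := by positivity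
      linarith
    linarith
  -- value at the optimum
  have hopt : ∀ v ∈ U, φ v ≠ ⊤ → ⟪xs, A v⟫ - r v + g xs ≤ Fs := by
    intro v hv hvt
    have h1 : ((⟪xs, A v⟫ : ℝ) : EReal) - φ v ≤ f xs := by
      rw [hf]
      exact le_iSup₂ (f := fun v (_ : v ∈ U) => ((⟪xs, A v⟫ : ℝ) : EReal) - φ v) v hv
    have h2 := add_le_add_left h1 ((g xs : ℝ) : EReal)
    rw [hFs, hr v hvt] at h2
    exact_mod_cast h2
  -- main induction
  have main : ∀ k : ℕ, ((k:ℝ) + 1) * (fg (γs (k+1)) (x (k+1)) + g (x (k+1)) - Fs)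
      + Lg * ‖xt (k+1) - xs‖ ^ 2
      ≤ Lg * ‖x 0 - xs‖ ^ 2 + G * DU * ((k:ℝ) / (2 * k + 1)) := by
    have step : ∀ k : ℕ, ((k:ℝ) + 1) * (fg (γs (k+1)) (x (k+1)) + g (x (k+1)) - Fs)
        + Lg * ‖xt (k+1) - xs‖ ^ 2 ≤ (k:ℝ) * (fg (γs k) (x k) + g (x k) - Fs)
        + Lg * ‖xt k - xs‖ ^ 2
        + b (us (γs (k+1)) (xh k)) * ((k:ℝ) * γs k - ((k:ℝ) + 1) * γs (k+1)) := by
      intro k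
      have hL : Lg + a / γs (k+1) = 2 * Lg * ((k:ℝ) + 1) := by
        rw [hγ, hG]; field_simp; ring
      have hp0 := hγpos k
      have hxr := hxrec k
      rw [hL] at hxr
      have hx1 := hxh k
      have hx2 := hxtrec k
      rw [hτ] at hx1 hx2
      have g1 := aux_convex_lower g g' hgcx hggrad (xh k)
      apply aux_step (k:ℝ) Lg (γs k) (γs (k+1)) (b (us (γs (k+1)) (xh k)))
        (fg (γs k) (x k) + g (x k)) (fg (γs (k+1)) (x (k+1)) + g (x (k+1)))
        (fg (γs (k+1)) (xh k) + g (xh k)) Fs (by positivity) hLg (x k) (xt k) (xh k) (x (k+1))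
        (xt (k+1)) xs (g' (xh k) + A (us (γs (k+1)) (xh k))) hx1 hxr hx2
      · have h1 := aux_descent g g' Lg hLg hggrad hglip (xh k) (x (k+1))
        have h2 := hsm _ hp0 (xh k) (x (k+1))
        rw [inner_add_left, ← hL]
        linarith
      · rcases Nat.eq_zero_or_pos k with h0 | h0
        · simp [h0]
        · obtain ⟨j, rfl⟩ : ∃ j, k = j + 1 := ⟨k - 1, by omega⟩
          apply mul_le_mul_of_nonneg_left _ (by positivity)
          have h1 := htan _ hp0 _ (hγpos j) (xh (j+1)) (x (j+1))
          have h2 := g1 (x (j+1))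
          rw [inner_add_left]
          linarith
      · have h1 := hopt (us (γs (k+1)) (xh k)) (humem _ hp0 _) (hufin _ hp0 _)
        have h2 := g1 xs
        have h3 := hfg (γs (k+1)) (xh k)
        have c1 := real_inner_comm xs (A (us (γs (k+1)) (xh k)))
        have c2 := real_inner_comm (xh k) (A (us (γs (k+1)) (xh k)))
        rw [inner_add_left, inner_sub_right (A _)]
        linarith
    intro k
    induction k with
    | zero =>
      have h := step 0
      rw [hxt0] at h
      have hb := mul_nonneg (hb0 _ (humem _ (hγpos 0) (ContinuousLinearMap.adjoint A (xh 0))))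
        (hγpos 0).le
      change 0 ≤ b (us (γs (0+1)) (xh 0)) * _ at hb
      simp only [Nat.cast_zero] at h ⊢
      simp only [zero_div, mul_zero, add_zero, zero_mul, zero_add] at h hb ⊢
      linarith
    | succ k ih =>
      have h := step (k+1)
      have hB0 := hb0 _ (humem _ (hγpos (k+1)) (ContinuousLinearMap.adjoint A (xh (k+1))))
      have hBD := hbD _ (humem _ (hγpos (k+1)) (ContinuousLinearMap.adjoint A (xh (k+1))))
        (hufin _ (hγpos (k+1)) _)
      change b (us (γs (k+1+1)) (xh (k+1))) ≤ DU at hBD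
      have hc : (((k+1:ℕ):ℝ) * γs (k+1) - (((k+1:ℕ):ℝ) + 1) * γs (k+1+1))
          = G * ((((k+1:ℕ):ℝ)) / (2 * ((k+1:ℕ):ℝ) + 1) - (k:ℝ) / (2 * k + 1)) := by
        rw [hγ, hγ]; push_cast; field_simp; ring
      have hc0 : 0 ≤ (((k+1:ℕ):ℝ) * γs (k+1) - (((k+1:ℕ):ℝ) + 1) * γs (k+1+1)) := by
        have : (((k+1:ℕ):ℝ) * γs (k+1) - (((k+1:ℕ):ℝ) + 1) * γs (k+1+1))
          = G / ((2 * k + 3) * (2 * k + 1)) := by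
          rw [hγ, hγ]; push_cast; field_simp; ring
        rw [this]; positivity
      have h2 := mul_le_mul_of_nonneg_right hBD hc0
      have h3 : DU * (((k+1:ℕ):ℝ) * γs (k+1) - (((k+1:ℕ):ℝ) + 1) * γs (k+1+1))
        = G * DU * ((((k+1:ℕ):ℝ)) / (2 * ((k+1:ℕ):ℝ) + 1)) - G * DU * ((k:ℝ) / (2 * k + 1)) := by
        rw [hc]; ring
      have h4 : (((k+1:ℕ):ℝ)) = (k:ℝ) + 1 := by push_cast; ring
      rw [h4] at h h2 h3 ⊢
      linarith
  intro k hk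
  obtain ⟨j, rfl⟩ : ∃ j, k = j + 1 := ⟨k - 1, by omega⟩
  -- f is close to its smoothing
  have hfle : f (x (j+1)) ≤ ((fg (γs (j+1)) (x (j+1)) + γs (j+1) * DU : ℝ) : EReal) := by
    rw [hf]
    refine iSup₂_le fun v hv => ?_
    by_cases hvt : φ v = ⊤
    · rw [hvt]; simp
    · rw [hr v hvt]
      have h1 := hmaxr _ (hγpos j) (ContinuousLinearMap.adjoint A (x (j+1))) v hv hvt
      rw [hadj] at h1
      change _ ≤ fg _ _ at h1
      have h2 := mul_le_mul_of_nonneg_left (hbD v hv hvt) (hγpos j).le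
      have h3 : ⟪x (j+1), A v⟫ - r v ≤ fg (γs (j+1)) (x (j+1)) + γs (j+1) * DU := by linarith
      exact_mod_cast h3
  have hreal : fg (γs (j+1)) (x (j+1)) + γs (j+1) * DU + g (x (j+1)) - Fs
      ≤ 3*Lg/(2*((j+1:ℕ):ℝ)) * ‖x 0 - xs‖^2
            + a/(Lg*((j+1:ℕ):ℝ)) * (2*Lb/Lg + 1) * DU
            + (Lb - 1)*a/(Lg^2*((j+1:ℕ):ℝ)) * (Real.log ((j+1:ℕ):ℝ) + 1) * DU := by
    have hlog : 0 ≤ Real.log ((j+1:ℕ):ℝ) := Real.log_natCast_nonneg _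
    have hm := main j
    have hn0 : 0 ≤ Lg * ‖xt (j+1) - xs‖ ^ 2 := by positivity
    have hj : (0:ℝ) ≤ j := j.cast_nonneg
    have e1 : ((j:ℝ) + 1) * (γs (j+1) * DU) + G * DU * ((j:ℝ) / (2 * j + 1)) = G * DU := by
      rw [hγ]; field_simp; ring
    have e2 : ((j:ℝ) + 1) * (fg (γs (j+1)) (x (j+1)) + γs (j+1) * DU + g (x (j+1)) - Fs)
        ≤ Lg * ‖x 0 - xs‖ ^ 2 + G * DU := by linarith
    have e3 : fg (γs (j+1)) (x (j+1)) + γs (j+1) * DU + g (x (j+1)) - Fs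
        ≤ (Lg * ‖x 0 - xs‖ ^ 2 + G * DU) / ((j:ℝ) + 1) := by
      rw [le_div_iff₀ (by positivity)]; linarith
    have t1 : 0 ≤ Lg / (2 * ((j:ℝ) + 1)) * ‖x 0 - xs‖ ^ 2 := by positivity
    have t2 : 0 ≤ a / (Lg * ((j:ℝ) + 1)) * (2 * Lb / Lg) * DU := by positivity
    have t3 : 0 ≤ (Lb - 1)*a/(Lg^2*((j+1:ℕ):ℝ)) * (Real.log ((j+1:ℕ):ℝ) + 1) * DU := by
      have : 0 ≤ Lb - 1 := by linarith
      positivity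
    have t4 : 3*Lg/(2*((j+1:ℕ):ℝ)) * ‖x 0 - xs‖^2
            + a/(Lg*((j+1:ℕ):ℝ)) * (2*Lb/Lg + 1) * DU
        = (Lg * ‖x 0 - xs‖ ^ 2 + G * DU) / ((j:ℝ) + 1)
          + Lg / (2 * ((j:ℝ) + 1)) * ‖x 0 - xs‖ ^ 2
          + a / (Lg * ((j:ℝ) + 1)) * (2 * Lb / Lg) * DU := by
      rw [hG]; push_cast; field_simp; ring
    linarith
  have h1 : f (x (j+1)) + ((g (x (j+1)) : ℝ) : EReal) - (Fs : EReal)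
      ≤ ((fg (γs (j+1)) (x (j+1)) + γs (j+1) * DU : ℝ) : EReal) + ((g (x (j+1)) : ℝ) : EReal)
        - (Fs : EReal) :=
    EReal.sub_le_sub (add_le_add_left hfle _) le_rfl
  refine h1.trans ?_
  exact_mod_cast hreal
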